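/- arXiv:2303.16995 — 3 statements merged into one kernel-verified Lean document; each statement's English description precedes it below -/
import Mathlib

section
/- For every n-coloring χ of the pairs of [N] with N = 2^{5^3 · 6 · log n} (colors in {1,...,n}, n ≥ 2), there exists a non-increasing triple, i.e., u < v < w with χ(u,v) = χ(u,w) ≥ χ(v,w) or χ(u,v) ≥ χ(v,w) = χ(u,w). Equivalently, f(3; n) ≤ 2^{750 log n} = n^{750}. -/
/-- A triple `u < v < w` is non-increasing with respect to `χ` if
`χ(u,v) = χ(u,w) ≥ χ(v,w)` or `χ(u,v) ≥ χ(v,w) = χ(u,w)`. -/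
def NonIncTriple (χ : ℕ → ℕ → ℕ) (u v w : ℕ) : Prop :=
  (χ u v = χ u w ∧ χ v w ≤ χ u w) ∨ (χ v w = χ u w ∧ χ v w ≤ χ u v)

/-!
Split an initial part of `[N]` into `n + 2` consecutive blocks of length `M = n ^ 3 + 1`, and
suppose there is no non-increasing triple. For fixed `u < w`, the pair of colors `(χ u v, χ v w)`
determines `v` among the vertices between `u` and `w` with `χ u v ≥ χ v w`, so for all but `n ^ 2`
of these vertices the color strictly increases along `u, v, w`. Hence the density of the pairs of
color at most `i` between the `i`-th block and the next one grows by at most `n ^ 2 / M` with each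
step of `i`. It is `0` at `i = 0` and `1` at `i = n`, which forces `M ≤ n ^ 3`.
-/

open Finset

/-- The coloring `χ` has no non-increasing triple with vertices in `S`. -/
def NonIncFree (χ : ℕ → ℕ → ℕ) (S : Finset ℕ) : Prop :=
  ∀ ⦃u v w⦄, u ∈ S → v ∈ S → w ∈ S → u < v → v < w → ¬ NonIncTriple χ u v w

/-- The proportion of the pairs in `A × B` whose color under `χ` is at most `k`. -/
def lowDensity (χ : ℕ → ℕ → ℕ) (k : ℕ) (A B : Finset ℕ) : ℚ :=
  Rel.edgeDensity (fun u v ↦ χ u v ≤ k) A B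

/-- The `i`-th interval of length `M`, counting from `i = 0`, in the division of the positive
integers into consecutive intervals of that length. -/
def block (M i : ℕ) : Finset ℕ := Ioc (i * M) ((i + 1) * M)

section Interedges

variable {α β : Type*} (r : α → β → Prop) [DecidableRel r] (s : Finset α) (t : Finset β)

lemma card_interedges_eq_sum_left : #(Rel.interedges r s t) = ∑ a ∈ s, #{b ∈ t | r a b} := by
  simp only [Rel.interedges, card_filter, sum_product]

lemma card_interedges_eq_sum_right : #(Rel.interedges r s t) = ∑ b ∈ t, #{a ∈ s | r a b} := by
  simp only [Rel.interedges, card_filter, sum_product_right]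

end Interedges

section Blocks

variable {M N i : ℕ}

lemma card_block : #(block M i) = M := by
  rw [block, Nat.card_Ioc, add_one_mul, Nat.add_sub_cancel_left]

lemma block_nonempty (hM : 0 < M) : (block M i).Nonempty :=
  card_pos.mp (card_block.symm ▸ hM)

lemma block_subset_Icc (h : (i + 1) * M ≤ N) : block M i ⊆ Icc 1 N := fun v hv ↦ by
  rw [block, mem_Ioc] at hv
  exact mem_Icc.mpr ⟨Nat.one_le_of_lt hv.1, hv.2.trans h⟩

lemma lt_of_mem_block_of_mem_block_succ {u v : ℕ} (hu : u ∈ block M i)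
    (hv : v ∈ block M (i + 1)) : u < v :=
  (mem_Ioc.mp hu).2.trans_lt (mem_Ioc.mp hv).1

end Blocks

namespace NonIncFree

variable {χ : ℕ → ℕ → ℕ} {S K A B C : Finset ℕ}

lemma ne_or_ne_of_descent (hfree : NonIncFree χ S) {u v v' w : ℕ}
    (hu : u ∈ S) (hv : v ∈ S) (hv' : v' ∈ S) (hw : w ∈ S)
    (huv : u < v) (hvv' : v < v') (hv'w : v' < w) (hdesc : χ v w ≤ χ u v) :
    χ u v ≠ χ u v' ∨ χ v w ≠ χ v' w := by
  by_contra! ⟨hleft, hright⟩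
  have h_gt : χ u v' < χ v v' := by
    by_contra! hle
    exact hfree hu hv hv' huv hvv' (.inl ⟨hleft, hle⟩)
  have h_lt : χ v v' < χ v' w := by
    by_contra! hle
    exact hfree hv hv' hw hvv' hv'w (.inr ⟨hright.symm, hle⟩)
  omega

lemma card_descents_le (hfree : NonIncFree χ S) (hχ : ∀ u v, χ u v ∈ K) {u w : ℕ}
    (hu : u ∈ S) (hw : w ∈ S) (hBS : B ⊆ S) (huB : ∀ v ∈ B, u < v) (hBw : ∀ v ∈ B, v < w) :
    #{v ∈ B | χ v w ≤ χ u v} ≤ #K ^ 2 := by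
  rw [sq, ← card_product]
  refine card_le_card_of_injOn (fun v ↦ (χ u v, χ v w))
    (fun v _ ↦ mem_product.mpr ⟨hχ u v, hχ v w⟩) ?_
  intro v hv v' hv' heq
  obtain ⟨hvB, hdesc⟩ := mem_filter.mp hv
  obtain ⟨hvB', hdesc'⟩ := mem_filter.mp hv'
  obtain ⟨hleft, hright⟩ := Prod.mk.inj heq
  rcases lt_trichotomy v v' with hlt | rfl | hgt
  · exact (hfree.ne_or_ne_of_descent hu (hBS hvB) (hBS hvB') hw (huB v hvB) hlt (hBw v' hvB')
      hdesc).elim (absurd hleft) (absurd hright)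
  · rfl
  · exact (hfree.ne_or_ne_of_descent hu (hBS hvB') (hBS hvB) hw (huB v' hvB') hgt (hBw v hvB)
      hdesc').elim (absurd hleft.symm) (absurd hright.symm)

lemma card_filter_le_succ_le (hfree : NonIncFree χ S) (hχ : ∀ u v, χ u v ∈ K) {u w : ℕ}
    (hu : u ∈ S) (hw : w ∈ S) (hBS : B ⊆ S) (huB : ∀ v ∈ B, u < v) (hBw : ∀ v ∈ B, v < w)
    (k : ℕ) : #{v ∈ B | χ v w ≤ k + 1} ≤ #{v ∈ B | χ u v ≤ k} + #K ^ 2 := by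
  have hcover : {v ∈ B | χ v w ≤ k + 1} ⊆ {v ∈ B | χ u v ≤ k} ∪ {v ∈ B | χ v w ≤ χ u v} := by
    intro v
    simp only [mem_union, mem_filter]
    grind
  calc #{v ∈ B | χ v w ≤ k + 1}
      ≤ #{v ∈ B | χ u v ≤ k} + #{v ∈ B | χ v w ≤ χ u v} :=
        (card_le_card hcover).trans (card_union_le _ _)
    _ ≤ #{v ∈ B | χ u v ≤ k} + #K ^ 2 := by
        gcongr
        exact hfree.card_descents_le hχ hu hw hBS huB hBw

lemma card_interedges_le_succ_le (hfree : NonIncFree χ S) (hχ : ∀ u v, χ u v ∈ K)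
    (hAS : A ⊆ S) (hBS : B ⊆ S) (hCS : C ⊆ S)
    (hAB : ∀ u ∈ A, ∀ v ∈ B, u < v) (hBC : ∀ v ∈ B, ∀ w ∈ C, v < w) (k : ℕ) :
    #A * #(Rel.interedges (fun v w ↦ χ v w ≤ k + 1) B C) ≤
      #C * #(Rel.interedges (fun u v ↦ χ u v ≤ k) A B) + #A * #C * #K ^ 2 := by
  calc #A * #(Rel.interedges (fun v w ↦ χ v w ≤ k + 1) B C)
      = ∑ _u ∈ A, ∑ w ∈ C, #{v ∈ B | χ v w ≤ k + 1} := by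
        rw [card_interedges_eq_sum_right, sum_const, smul_eq_mul]
    _ ≤ ∑ u ∈ A, ∑ _w ∈ C, (#{v ∈ B | χ u v ≤ k} + #K ^ 2) := by
        gcongr with u hu w hw
        exact hfree.card_filter_le_succ_le hχ (hAS hu) (hCS hw) hBS (hAB u hu)
          (fun v hv ↦ hBC v hv w hw) k
    _ = #C * #(Rel.interedges (fun u v ↦ χ u v ≤ k) A B) + #A * #C * #K ^ 2 := by
        simp only [card_interedges_eq_sum_left, sum_const, smul_eq_mul, mul_add, sum_add_distrib,
          mul_sum, mul_assoc]

lemma lowDensity_succ_le (hfree : NonIncFree χ S) (hχ : ∀ u v, χ u v ∈ K)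
    (hAS : A ⊆ S) (hBS : B ⊆ S) (hCS : C ⊆ S)
    (hAB : ∀ u ∈ A, ∀ v ∈ B, u < v) (hBC : ∀ v ∈ B, ∀ w ∈ C, v < w)
    (hA : A.Nonempty) (hB : B.Nonempty) (hC : C.Nonempty) (k : ℕ) :
    lowDensity χ (k + 1) B C ≤ lowDensity χ k A B + (#K : ℚ) ^ 2 / #B := by
  have hA_pos : (0 : ℚ) < #A := by exact_mod_cast hA.card_pos
  have hB_pos : (0 : ℚ) < #B := by exact_mod_cast hB.card_pos
  have hC_pos : (0 : ℚ) < #C := by exact_mod_cast hC.card_pos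
  have hcount : (#A * #(Rel.interedges (fun v w ↦ χ v w ≤ k + 1) B C) : ℚ) ≤
      #C * #(Rel.interedges (fun u v ↦ χ u v ≤ k) A B) + #A * #C * #K ^ 2 := by
    exact_mod_cast hfree.card_interedges_le_succ_le hχ hAS hBS hCS hAB hBC k
  rw [lowDensity, lowDensity, Rel.edgeDensity, Rel.edgeDensity]
  field_simp
  linarith

lemma lowDensity_block_le {n M N : ℕ} (hfree : NonIncFree χ (Icc 1 N))
    (hχ : ∀ u v, χ u v ∈ Icc 1 n) (hM : 0 < M) (i : ℕ) (hi : (i + 2) * M ≤ N) :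
    lowDensity χ i (block M i) (block M (i + 1)) ≤ i * (n ^ 2 / M) := by
  induction i with
  | zero =>
    have hpos (u v : ℕ) : χ u v ≠ 0 := Nat.one_le_iff_ne_zero.mp (mem_Icc.mp (hχ u v)).1
    simp [lowDensity, Rel.edgeDensity, Rel.interedges, hpos]
  | succ i ih =>
    have hsub (j : ℕ) (hj : j ≤ i + 2) : block M j ⊆ Icc 1 N :=
      block_subset_Icc (hi.trans' (Nat.mul_le_mul_right M (by omega)))
    calc lowDensity χ (i + 1) (block M (i + 1)) (block M (i + 2))
        ≤ lowDensity χ i (block M i) (block M (i + 1)) +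
            (#(Icc 1 n) : ℚ) ^ 2 / #(block M (i + 1)) :=
          hfree.lowDensity_succ_le hχ (hsub _ (by omega)) (hsub _ (by omega)) (hsub _ le_rfl)
            (fun _ hu _ hv ↦ lt_of_mem_block_of_mem_block_succ hu hv)
            (fun _ hv _ hw ↦ lt_of_mem_block_of_mem_block_succ hv hw)
            (block_nonempty hM) (block_nonempty hM) (block_nonempty hM) i
      _ ≤ i * (n ^ 2 / M) + n ^ 2 / M := by
          rw [Nat.card_Icc, Nat.add_sub_cancel, card_block]
          gcongr
          exact ih (hi.trans' (Nat.mul_le_mul_right M (by omega)))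
      _ = (i + 1 : ℕ) * (n ^ 2 / M) := by push_cast; ring

end NonIncFree

lemma lowDensity_eq_one {χ : ℕ → ℕ → ℕ} {k : ℕ} {A B : Finset ℕ}
    (hχ : ∀ u ∈ A, ∀ v ∈ B, χ u v ≤ k) (hA : A.Nonempty) (hB : B.Nonempty) :
    lowDensity χ k A B = 1 := by
  have hall : Rel.interedges (fun u v ↦ χ u v ≤ k) A B = A ×ˢ B :=
    filter_true_of_mem fun p hp ↦ hχ p.1 (mem_product.mp hp).1 p.2 (mem_product.mp hp).2
  have hpos : (0 : ℚ) < #A * #B := by exact_mod_cast Nat.mul_pos hA.card_pos hB.card_pos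
  rw [lowDensity, Rel.edgeDensity, hall, card_product, Nat.cast_mul, div_self hpos.ne']

lemma add_two_mul_cube_add_one_le_pow {n k : ℕ} (hn : 2 ≤ n) (hk : 6 ≤ k) :
    (n + 2) * (n ^ 3 + 1) ≤ n ^ k :=
  calc (n + 2) * (n ^ 3 + 1) ≤ n ^ 2 * n ^ 4 := by
        gcongr
        · nlinarith
        · nlinarith [Nat.one_le_pow 3 n (by omega)]
    _ = n ^ 6 := (pow_add n 2 4).symm
    _ ≤ n ^ k := Nat.pow_le_pow_right (by omega) hk

theorem f_three_bound_general (n N : ℕ) (hN : (n + 2) * (n ^ 3 + 1) ≤ N)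
    (χ : ℕ → ℕ → ℕ) (hχ : ∀ u v, χ u v ∈ Finset.Icc 1 n) :
    ∃ u v w, u ∈ Finset.Icc 1 N ∧ v ∈ Finset.Icc 1 N ∧ w ∈ Finset.Icc 1 N ∧
      u < v ∧ v < w ∧ NonIncTriple χ u v w := by
  by_contra hnone
  have hfree : NonIncFree χ (Icc 1 N) := fun u v w hu hv hw huv hvw htriple ↦
    hnone ⟨u, v, w, hu, hv, hw, huv, hvw, htriple⟩
  have hM : 0 < n ^ 3 + 1 := Nat.succ_pos _
  have hone : lowDensity χ n (block (n ^ 3 + 1) n) (block (n ^ 3 + 1) (n + 1)) = 1 :=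
    lowDensity_eq_one (fun u _ v _ ↦ (mem_Icc.mp (hχ u v)).2)
      (block_nonempty hM) (block_nonempty hM)
  have hle := hfree.lowDensity_block_le hχ hM n hN
  rw [hone, mul_div_assoc', ← pow_succ', Nat.cast_succ, Nat.cast_pow,
    one_le_div (by positivity)] at hle
  exact (lt_add_one _).not_ge hle

/-- `f(3; n) ≤ 2^{750 log n} = n^{750}`: for `n ≥ 2`, every coloring of the pairs of
`[N]`, `N ≥ n^{750}`, with colors in `{1, ..., n}` contains a non-increasing triple. -/
theorem f_three_bound (n N : ℕ) (hn : 2 ≤ n) (hN : n ^ 750 ≤ N)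
    (χ : ℕ → ℕ → ℕ) (hχ : ∀ u v, χ u v ∈ Finset.Icc 1 n) :
    ∃ u v w, u ∈ Finset.Icc 1 N ∧ v ∈ Finset.Icc 1 N ∧ w ∈ Finset.Icc 1 N ∧
      u < v ∧ v < w ∧ NonIncTriple χ u v w :=
  f_three_bound_general n N ((add_two_mul_cube_add_one_le_pow hn (by norm_num)).trans hN) χ hχ
end

section
/- For s fixed and n ≥ 2, the ordered 3-uniform Ramsey number of the complete 3-uniform hypergraph K_s versus the tight monotone path P_n satisfies r_3(K_s, P_n) < 2^{c_s (log n)^{s-1}} where c_s = 5^s s!. -/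
/-!
Suppose there is no blue tight path on `n` vertices, and colour a pair `u < v` by the length of
the longest blue tight path ending in `u, v`. Along a blue triple `u < v < w` this colour strictly
increases, so it suffices to find `s` vertices on which the colours of consecutive pairs never
increase.

To find them, partition the pairs into classes, fix a target size `a i` for every class `i`, and
look for a set of `a i` vertices whose pairs all lie in class `i` and whose colours never
increase. Call a colour heavy at `v` for the class `i` if many pairs `w v` with `w < v` lie in
class `i` and have at least that colour. Let `y` be the last vertex of a large set of vertices
with the same heavy colours. For most earlier vertices `b` of this set the colour of `b y` is
heavy at `y`, hence also at `b`, so many `x < b` have `x b` in the class of `b y` with at least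
the colour of `b y`. By double counting, there are a vertex `x`, a class `i`, a colour `c` and a
large set `B` between `x` and `y` such that, for all `b ∈ B`, the pairs `x b` and `b y` lie in
class `i`, the first has colour `c` and the second has colour at most `c`.

Inside `B`, split the class `i` into the pairs of colour at most `c` and those of colour above
`c`, lowering the target of both halves by one: a solution in the first half is extended by `x`, a
solution in the second half by `y`. Since `2 ^ (a - 1) - 1 = 2 * (2 ^ (a - 2) - 1) + 1` for
`a ≥ 2`, the sum of the weights `2 ^ (a i - 1) - 1` drops with each split, so `2 ^ (s - 1) - 1`
splits suffice. The resulting bound is polynomial in `n`.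
-/

open Finset

section Counting

variable {α β : Type*}

lemma eq_of_isLowerSet_of_card_eq [LinearOrder α] {s t : Finset α}
    (hs : IsLowerSet (s : Set α)) (ht : IsLowerSet (t : Set α)) (h : #s = #t) : s = t := by
  rcases hs.total ht with hst | hts
  · exact eq_of_subset_of_card_le (coe_subset.1 hst) h.ge
  · exact (eq_of_subset_of_card_le (coe_subset.1 hts) h.le).symm

lemma exists_card_le_card_mul_card_fiber [Fintype β] [Nonempty β] [DecidableEq β]
    (s : Finset α) (L : α → β) : ∃ b, #s ≤ Fintype.card β * #{a ∈ s | L a = b} := by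
  obtain ⟨b, -, hb⟩ := exists_max_image univ (fun b ↦ #{a ∈ s | L a = b}) univ_nonempty
  refine ⟨b, ?_⟩
  calc #s = ∑ b', #{a ∈ s | L a = b'} := card_eq_sum_card_fiberwise fun _ _ ↦ mem_coe.2 (mem_univ _)
    _ ≤ Fintype.card β * #{a ∈ s | L a = b} := sum_le_card_nsmul _ _ _ hb

lemma exists_le_card_filter_of_forall_le_card_filter {s : Finset α} {t : Finset β}
    (r : α → β → Prop) [∀ a b, Decidable (r a b)] {d m : ℕ} (hs : s.Nonempty)
    (ht : ∀ b ∈ t, m ≤ #{a ∈ s | r a b}) (hst : #s * d ≤ #t * m) :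
    ∃ a ∈ s, d ≤ #{b ∈ t | r a b} := by
  refine exists_le_of_sum_le hs ?_
  calc ∑ _a ∈ s, d = #s * d := by rw [sum_const, smul_eq_mul]
    _ ≤ ∑ b ∈ t, #{a ∈ s | r a b} := hst.trans (card_nsmul_le_sum _ _ _ ht)
    _ = ∑ a ∈ s, #{b ∈ t | r a b} := (sum_card_bipartiteAbove_eq_sum_card_bipartiteBelow r).symm

end Counting

section Heavy

variable {α ι κ : Type*} [LinearOrder α] [DecidableEq ι] [LinearOrder κ] [Fintype κ]
  (f : α → α → κ) (ψ : α → α → ι) (U : Finset α) (m : ℕ)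

/-- The colours `c` that are heavy at the vertex `v` for the class `i`: at least `m` vertices
`w < v` of `U` have `w v` in class `i` with colour at least (not necessarily equal to) `c`. -/
def heavyColors (v : α) (i : ι) : Finset κ :=
  {c | m ≤ #{w ∈ U | w < v ∧ ψ w v = i ∧ c ≤ f w v}}

variable {f ψ U m}

lemma mem_heavyColors {v : α} {i : ι} {c : κ} :
    c ∈ heavyColors f ψ U m v i ↔ m ≤ #{w ∈ U | w < v ∧ ψ w v = i ∧ c ≤ f w v} := by
  simp only [heavyColors, mem_filter_univ]

lemma isLowerSet_heavyColors (v : α) (i : ι) :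
    IsLowerSet (heavyColors f ψ U m v i : Set κ) := fun c d hdc hc ↦ by
  rw [mem_coe, mem_heavyColors] at hc ⊢
  refine hc.trans (card_le_card (monotone_filter_right U ?_))
  exact fun w _ hw ↦ ⟨hw.1, hw.2.1, hdc.trans hw.2.2⟩

lemma card_filter_notMem_heavyColors_le (y : α) (i : ι) :
    #{u ∈ U | u < y ∧ ψ u y = i ∧ f u y ∉ heavyColors f ψ U m y i} ≤ m := by
  rcases eq_empty_or_nonempty {u ∈ U | u < y ∧ ψ u y = i ∧ f u y ∉ heavyColors f ψ U m y i}
    with hempty | hne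
  · simp only [hempty, card_empty, zero_le]
  · obtain ⟨u, hu, hmin⟩ := exists_min_image _ (f · y) hne
    have hlight := (mem_filter.1 hu).2.2.2
    rw [mem_heavyColors, not_le] at hlight
    refine (card_le_card fun w hw ↦ ?_).trans hlight.le
    have hw' := mem_filter.1 hw
    exact mem_filter.2 ⟨hw'.1, hw'.2.1, hw'.2.2.1, hmin w hw⟩

variable [Fintype ι]

lemma card_filter_light_le (y : α) :
    #{u ∈ U | u < y ∧ f u y ∉ heavyColors f ψ U m y (ψ u y)} ≤ Fintype.card ι * m := by
  calc #{u ∈ U | u < y ∧ f u y ∉ heavyColors f ψ U m y (ψ u y)}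
      ≤ #(univ.biUnion fun i ↦ {u ∈ U | u < y ∧ ψ u y = i ∧ f u y ∉ heavyColors f ψ U m y i}) :=
        card_le_card fun u hu ↦ by simpa using hu
    _ ≤ Fintype.card ι * m :=
        card_biUnion_le_card_mul _ _ _ fun i _ ↦ card_filter_notMem_heavyColors_le y i

variable (f ψ U m)

lemma exists_heavyColors_eq :
    ∃ Z ⊆ U, #U ≤ (Fintype.card κ + 1) ^ Fintype.card ι * #Z ∧
      ∀ u ∈ Z, ∀ v ∈ Z, heavyColors f ψ U m u = heavyColors f ψ U m v := by
  -- Being an initial segment of `κ`, a set of heavy colours is determined by its size.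
  let size (v : α) (i : ι) : Fin (Fintype.card κ + 1) :=
    ⟨#(heavyColors f ψ U m v i), Nat.lt_succ_of_le (card_le_univ _)⟩
  obtain ⟨b, hb⟩ := exists_card_le_card_mul_card_fiber U size
  refine ⟨{v ∈ U | size v = b}, filter_subset _ _, by simpa using hb, fun u hu v hv ↦ ?_⟩
  have hsize : size u = size v := (mem_filter.1 hu).2.trans (mem_filter.1 hv).2.symm
  funext i
  exact eq_of_isLowerSet_of_card_eq (isLowerSet_heavyColors u i) (isLowerSet_heavyColors v i)
    (congrArg Fin.val (congrFun hsize i))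

lemma exists_forall_mem_heavyColors
    (hU : 2 * (Fintype.card κ + 1) ^ Fintype.card ι * (1 + Fintype.card ι * m) ≤ #U) :
    ∃ y ∈ U, ∃ G ⊆ U, #U ≤ 2 * (Fintype.card κ + 1) ^ Fintype.card ι * #G ∧
      ∀ u ∈ G, u < y ∧ f u y ∈ heavyColors f ψ U m u (ψ u y) := by
  obtain ⟨Z, hZU, hcard, heq⟩ := exists_heavyColors_eq f ψ U m
  set M := (Fintype.card κ + 1) ^ Fintype.card ι
  have hZ : 2 * (1 + Fintype.card ι * m) ≤ #Z := by
    refine Nat.le_of_mul_le_mul_left ?_ (show 0 < M by positivity)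
    linarith
  have hne : Z.Nonempty := card_pos.1 (by lia)
  set y := Z.max' hne
  have hyZ : y ∈ Z := Z.max'_mem hne
  set G := {u ∈ Z | u < y ∧ f u y ∈ heavyColors f ψ U m y (ψ u y)}
  have hcover : Z ⊆ insert y
      (G ∪ {u ∈ U | u < y ∧ f u y ∉ heavyColors f ψ U m y (ψ u y)}) := fun u hu ↦ by
    have := (Z.le_max' u hu).eq_or_lt
    grind
  have hZG : #Z ≤ #G + Fintype.card ι * m + 1 := by
    refine (card_le_card hcover).trans ((card_insert_le _ _).trans (Nat.succ_le_succ ?_))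
    exact (card_union_le _ _).trans (Nat.add_le_add_left (card_filter_light_le y) _)
  refine ⟨y, hZU hyZ, G, (filter_subset _ _).trans hZU, ?_, fun u hu ↦ ?_⟩
  · calc #U ≤ M * #Z := hcard
      _ ≤ M * (2 * #G) := Nat.mul_le_mul_left _ (by lia)
      _ = 2 * M * #G := by ring
  · obtain ⟨huZ, huy, hheavy⟩ := mem_filter.1 hu
    exact ⟨huy, heq u huZ y hyZ ▸ hheavy⟩

end Heavy

/-- The factor by which the vertex set shrinks in one splitting step, when there are `q` classes
and `n - 1` colours. -/
def shrinkFactor (q n : ℕ) : ℕ := 4 * q ^ 2 * n ^ (2 * q + 1)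

lemma shrinkFactor_pos {q n : ℕ} (hq : 0 < q) (hn : 0 < n) : 0 < shrinkFactor q n := by
  unfold shrinkFactor
  positivity

lemma shrinkFactor_mono_left {p q n : ℕ} (hpq : p ≤ q) (hn : 0 < n) :
    shrinkFactor p n ≤ shrinkFactor q n := by
  unfold shrinkFactor
  gcongr

lemma shrinkFactor_two_pow (s n : ℕ) :
    shrinkFactor (2 ^ s) n = 4 ^ (s + 1) * n ^ (2 ^ (s + 1) + 1) := by
  have hsq : (2 ^ s) ^ 2 = 4 ^ s := pow_right_comm 2 s 2
  rw [shrinkFactor, hsq, pow_succ' 4, pow_succ' 2]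

lemma le_shrinkFactor_mul {q r W : ℕ} (hq : 0 < q) (hW : 0 < W) :
    2 * (r + 1) ^ q * (1 + q * (2 * (r + 1) ^ q * (q * r * W))) ≤ shrinkFactor q (r + 1) * W := by
  set M := (r + 1) ^ q with hM
  have hpos : 0 < M * q ^ 2 * W := by positivity
  calc 2 * M * (1 + q * (2 * M * (q * r * W)))
      = 2 * M * 1 + 4 * M ^ 2 * q ^ 2 * r * W := by ring
    _ ≤ 2 * M * (2 * (M * q ^ 2 * W)) + 4 * M ^ 2 * q ^ 2 * r * W := by gcongr; lia
    _ = shrinkFactor q (r + 1) * W := by rw [shrinkFactor, hM]; ring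

section SplitClass

variable {α ι κ : Type*} [DecidableEq ι] [LinearOrder κ]

/-- The partition obtained from `ψ` by moving the pairs of class `i` with colour above `c` to the
new class `none`. -/
def splitClass (f : α → α → κ) (ψ : α → α → ι) (i : ι) (c : κ) (u v : α) : Option ι :=
  if ψ u v = i ∧ c < f u v then none else some (ψ u v)

/-- The target sizes after splitting the class `i`: both halves have to provide one vertex less. -/
def splitTarget (a : ι → ℕ) (i : ι) : Option ι → ℕ
  | none => a i - 1
  | some j => Function.update a i (a i - 1) j

lemma splitClass_eq_none {f : α → α → κ} {ψ : α → α → ι} {i : ι} {c : κ} {u v : α} :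
    splitClass f ψ i c u v = none ↔ ψ u v = i ∧ c < f u v := by
  simp [splitClass]

lemma splitClass_eq_some {f : α → α → κ} {ψ : α → α → ι} {i j : ι} {c : κ} {u v : α} :
    splitClass f ψ i c u v = some j ↔ ψ u v = j ∧ (j = i → f u v ≤ c) := by
  unfold splitClass
  grind

end SplitClass

section Splitting

variable {α ι κ : Type*} [LinearOrder α] [LinearOrder κ]

lemma exists_large_between [Fintype ι] [Fintype κ] (f : α → α → κ) (ψ : α → α → ι)
    {U : Finset α} {W : ℕ} (hW : 0 < W) (hUne : U.Nonempty)
    (hU : shrinkFactor (Fintype.card ι) (Fintype.card κ + 1) * W ≤ #U) :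
    ∃ i c, ∃ x ∈ U, ∃ y ∈ U, ∃ B ⊆ U, W ≤ #B ∧
      ∀ b ∈ B, (x < b ∧ ψ x b = i ∧ f x b = c) ∧ b < y ∧ ψ b y = i ∧ f b y ≤ c := by
  classical
  obtain ⟨z, hz⟩ := hUne
  have : Nonempty ι := ⟨ψ z z⟩
  have : Nonempty κ := ⟨f z z⟩
  set D := Fintype.card ι * Fintype.card κ * W with hD
  set M := (Fintype.card κ + 1) ^ Fintype.card ι
  obtain ⟨y, hyU, G, hGU, hUG, hG⟩ := exists_forall_mem_heavyColors f ψ U (2 * M * D)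
    ((le_shrinkFactor_mul Fintype.card_pos hW).trans hU)
  obtain ⟨x, hxU, hx⟩ := exists_le_card_filter_of_forall_le_card_filter (d := D)
    (fun x u ↦ x < u ∧ ψ x u = ψ u y ∧ f u y ≤ f x u) ⟨z, hz⟩
    (fun u hu ↦ mem_heavyColors.1 (hG u hu).2) <|
      calc #U * D ≤ 2 * M * #G * D := Nat.mul_le_mul_right D hUG
        _ = #G * (2 * M * D) := by ring
  obtain ⟨⟨i, c⟩, -, hB⟩ := exists_le_card_fiber_of_mul_le_card_of_maps_to
    (t := univ) (f := fun u ↦ (ψ x u, f x u)) (n := W) (fun _ _ ↦ mem_univ _) univ_nonempty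
    (by rwa [card_univ, Fintype.card_prod, ← hD])
  refine ⟨i, c, x, hxU, y, hyU, _,
    ((filter_subset _ _).trans (filter_subset _ _)).trans hGU, hB, fun b hb ↦ ?_⟩
  obtain ⟨hb, hic⟩ := mem_filter.1 hb
  obtain ⟨hbG, hxb, hψ, hf⟩ := mem_filter.1 hb
  obtain ⟨rfl, rfl⟩ := Prod.mk.inj hic
  exact ⟨⟨hxb, rfl, rfl⟩, (hG b hbG).1, hψ.symm, hf⟩

/-- A set of vertices all of whose pairs lie in the class `i` of `ψ`, and along which the colour `f`
of consecutive pairs never increases. -/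
structure IsDescending (f : α → α → κ) (ψ : α → α → ι) (i : ι) (S : Finset α) : Prop where
  class_eq : ∀ u ∈ S, ∀ v ∈ S, u < v → ψ u v = i
  color_le : ∀ u ∈ S, ∀ v ∈ S, ∀ w ∈ S, u < v → v < w → f v w ≤ f u v

namespace IsDescending

variable {f : α → α → κ} {ψ : α → α → ι} {i : ι} {c : κ} {S : Finset α}

lemma of_card_le_one (hS : #S ≤ 1) : IsDescending f ψ i S where
  class_eq u hu v hv huv := absurd (card_le_one.1 hS u hu v hv) huv.ne
  color_le u hu v hv _ _ huv _ := absurd (card_le_one.1 hS u hu v hv) huv.ne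

variable [DecidableEq ι]

lemma insert_left {x : α} (hS : IsDescending f (splitClass f ψ i c) (some i) S)
    (hx : ∀ b ∈ S, x < b ∧ ψ x b = i ∧ f x b = c) : IsDescending f ψ i (insert x S) := by
  have hpair : ∀ u ∈ S, ∀ v ∈ S, u < v → ψ u v = i ∧ f u v ≤ c :=
    fun u hu v hv huv ↦ (splitClass_eq_some.1 (hS.class_eq u hu v hv huv)).imp_right (· rfl)
  have hcolor := hS.color_le
  constructor <;> grind

lemma insert_right {y : α} (hS : IsDescending f (splitClass f ψ i c) none S)
    (hy : ∀ b ∈ S, b < y ∧ ψ b y = i ∧ f b y ≤ c) : IsDescending f ψ i (insert y S) := by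
  have hpair : ∀ u ∈ S, ∀ v ∈ S, u < v → ψ u v = i ∧ c < f u v :=
    fun u hu v hv huv ↦ splitClass_eq_none.1 (hS.class_eq u hu v hv huv)
  have hcolor := hS.color_le
  constructor <;> grind

lemma of_splitClass {j : ι} (hS : IsDescending f (splitClass f ψ i c) (some j) S) :
    IsDescending f ψ j S where
  class_eq u hu v hv huv := (splitClass_eq_some.1 (hS.class_eq u hu v hv huv)).1
  color_le := hS.color_le

end IsDescending

lemma exists_isDescending_of_splitClass [DecidableEq ι] {f : α → α → κ} {ψ : α → α → ι}
    {a : ι → ℕ} {i : ι} {c : κ} {x y : α} {B : Finset α} {o : Option ι} {S : Finset α}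
    (hi : 0 < a i) (hSB : S ⊆ B)
    (hB : ∀ b ∈ B, (x < b ∧ ψ x b = i ∧ f x b = c) ∧ b < y ∧ ψ b y = i ∧ f b y ≤ c)
    (hcard : #S = splitTarget a i o) (hS : IsDescending f (splitClass f ψ i c) o S) :
    ∃ j, ∃ T ⊆ insert x (insert y B), #T = a j ∧ IsDescending f ψ j T := by
  have hxS : x ∉ S := fun h ↦ (hB x (hSB h)).1.1.false
  have hyS : y ∉ S := fun h ↦ (hB y (hSB h)).2.1.false
  have hSxy : S ⊆ insert y B := hSB.trans (subset_insert _ _)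
  rcases o with _ | j
  · refine ⟨i, insert y S, (insert_subset_insert y hSB).trans (subset_insert _ _), ?_,
      hS.insert_right fun b hb ↦ (hB b (hSB hb)).2⟩
    rw [card_insert_of_notMem hyS, hcard, splitTarget, Nat.sub_add_cancel hi]
  · rcases eq_or_ne j i with rfl | hji
    · refine ⟨j, insert x S, insert_subset_insert x hSxy, ?_,
        hS.insert_left fun b hb ↦ (hB b (hSB hb)).1⟩
      rw [card_insert_of_notMem hxS, hcard, splitTarget, Function.update_self,
        Nat.sub_add_cancel hi]
    · refine ⟨j, S, hSxy.trans (subset_insert _ _), ?_, hS.of_splitClass⟩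
      rw [hcard, splitTarget, Function.update_of_ne hji]

lemma sum_weight_splitTarget_lt [Fintype ι] [DecidableEq ι] {a : ι → ℕ} {i : ι} (hi : 1 < a i) :
    ∑ o, (2 ^ (splitTarget a i o - 1) - 1) < ∑ j, (2 ^ (a j - 1) - 1) := by
  have hrest : ∑ j ∈ univ.erase i, (2 ^ (Function.update a i (a i - 1) j - 1) - 1) =
      ∑ j ∈ univ.erase i, (2 ^ (a j - 1) - 1) :=
    sum_congr rfl fun j hj ↦ by rw [Function.update_of_ne (ne_of_mem_erase hj)]
  obtain ⟨b, hb⟩ : ∃ b, a i = b + 2 := Nat.exists_eq_add_of_le' hi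
  have hdouble : (2 ^ b - 1) + (2 ^ b - 1) < 2 ^ (b + 1) - 1 := by
    have := Nat.one_le_two_pow (n := b)
    lia
  simp only [Fintype.sum_option, splitTarget]
  rw [← add_sum_erase _ _ (mem_univ i), ← add_sum_erase univ (fun j ↦ 2 ^ (a j - 1) - 1)
    (mem_univ i), hrest, Function.update_self, hb, ← add_assoc]
  exact Nat.add_lt_add_right hdouble _

lemma exists_isDescending_of_target_le_one (f : α → α → κ) (ψ : α → α → ι) {U : Finset α}
    {a : ι → ℕ} {i : ι} (hi : a i ≤ 1) (hUne : U.Nonempty) :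
    ∃ j, ∃ S ⊆ U, #S = a j ∧ IsDescending f ψ j S := by
  obtain ⟨S, hSU, hS⟩ := exists_subset_card_eq (hi.trans hUne.card_pos)
  exact ⟨i, S, hSU, hS, .of_card_le_one (hS.trans_le hi)⟩

theorem exists_isDescending [Fintype ι] [Fintype κ] (f : α → α → κ) (ψ : α → α → ι)
    {U : Finset α} {k : ℕ} {a : ι → ℕ} (ha : ∑ i, (2 ^ (a i - 1) - 1) ≤ k)
    (hU : shrinkFactor (Fintype.card ι + k) (Fintype.card κ + 1) ^ k ≤ #U) :
    ∃ i, ∃ S ⊆ U, #S = a i ∧ IsDescending f ψ i S := by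
  classical
  induction k generalizing ι U with
  | zero =>
    have hUne : U.Nonempty := card_pos.1 hU
    obtain ⟨z, -⟩ := id hUne
    have hweight : 2 ^ (a (ψ z z) - 1) - 1 = 0 :=
      sum_eq_zero_iff.1 (Nat.le_zero.1 ha) _ (mem_univ _)
    have := Nat.lt_two_pow_self (n := a (ψ z z) - 1)
    exact exists_isDescending_of_target_le_one f ψ (i := ψ z z) (by lia) hUne
  | succ k ih =>
    set F := shrinkFactor (Fintype.card ι + (k + 1)) (Fintype.card κ + 1)
    have hFpos : 0 < F := shrinkFactor_pos (by lia) (by lia)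
    have hUne : U.Nonempty := card_pos.1 ((pow_pos hFpos _).trans_le hU)
    have hstep : shrinkFactor (Fintype.card ι) (Fintype.card κ + 1) * F ^ k ≤ #U := by
      rw [pow_succ'] at hU
      refine (Nat.mul_le_mul_right _ ?_).trans hU
      exact shrinkFactor_mono_left (Nat.le_add_right _ _) (Nat.succ_pos _)
    obtain ⟨i, c, x, hx, y, hy, B, hBU, hBcard, hB⟩ :=
      exists_large_between f ψ (pow_pos hFpos k) hUne hstep
    rcases le_or_gt (a i) 1 with hi | hi
    · exact exists_isDescending_of_target_le_one f ψ hi hUne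
    obtain ⟨o, S, hSB, hcard, hS⟩ := ih (splitClass f ψ i c)
      (Nat.le_of_lt_succ ((sum_weight_splitTarget_lt hi).trans_le ha))
      (by rwa [Fintype.card_option, add_right_comm, add_assoc])
    obtain ⟨j, T, hT, hTcard, hTdesc⟩ :=
      exists_isDescending_of_splitClass (Nat.zero_lt_of_lt hi) hSB hB hcard hS
    exact ⟨j, T, hT.trans (insert_subset hx (insert_subset hy hBU)), hTcard, hTdesc⟩

end Splitting

section TightPath

variable {α : Type*} [LinearOrder α]

/-- The first `n` values of `v` are the vertices of a tight monotone path in `U`, all of whose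
edges satisfy `blue`. The values of `v` from `n` on are irrelevant. -/
structure IsTightPath (blue : α → α → α → Prop) (U : Finset α) (n : ℕ) (v : ℕ → α) : Prop where
  mem : ∀ i < n, v i ∈ U
  lt : ∀ i j, i < j → j < n → v i < v j
  edge : ∀ i, i + 2 < n → blue (v i) (v (i + 1)) (v (i + 2))

/-- Some blue tight path on `k + 2` vertices of `U` has `u, v` as its last two vertices. -/
def EndsTightPath (blue : α → α → α → Prop) (U : Finset α) (u v : α) (k : ℕ) : Prop :=
  ∃ p, IsTightPath blue U (k + 2) p ∧ p k = u ∧ p (k + 1) = v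

variable {blue : α → α → α → Prop} {U : Finset α}

lemma endsTightPath_zero {u v : α} (hu : u ∈ U) (hv : v ∈ U) (huv : u < v) :
    EndsTightPath blue U u v 0 := by
  refine ⟨fun i ↦ if i = 0 then u else v, ⟨?_, ?_, ?_⟩, ?_, ?_⟩ <;> grind

lemma EndsTightPath.succ {u v w : α} {k : ℕ} (h : EndsTightPath blue U u v k) (hw : w ∈ U)
    (hvw : v < w) (hblue : blue u v w) : EndsTightPath blue U v w (k + 1) := by
  obtain ⟨p, ⟨hmem, hlt, hedge⟩, rfl, rfl⟩ := h
  refine ⟨Function.update p (k + 2) w, ⟨?_, ?_, ?_⟩, ?_, ?_⟩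
  · grind
  · intro i j hij hj
    rcases (show i < k + 1 ∨ i = k + 1 by lia) with hi | rfl
    · have := (hlt i (k + 1) hi (by lia)).trans hvw
      grind
    · grind
  · intro i hi
    rcases (show i < k ∨ i = k by lia) with hi | rfl <;> grind
  · grind
  · grind

lemma exists_color_lt_of_blue {n : ℕ} (hn : 2 ≤ n) (hpath : ¬∃ v, IsTightPath blue U n v) :
    ∃ f : α → α → Fin (n - 1), ∀ u ∈ U, ∀ v ∈ U, ∀ w ∈ U, u < v → v < w →
      blue u v w → f u v < f v w := by
  classical
  refine ⟨fun u v ↦ ⟨Nat.findGreatest (EndsTightPath blue U u v) (n - 2),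
    (Nat.findGreatest_le _).trans_lt (by lia)⟩, fun u hu v hv w hw huv hvw hblue ↦ ?_⟩
  set k := Nat.findGreatest (EndsTightPath blue U u v) (n - 2) with hk
  have hends : EndsTightPath blue U u v k :=
    Nat.findGreatest_spec (Nat.zero_le _) (endsTightPath_zero hu hv huv)
  have hkn : k < n - 2 := by
    refine (Nat.findGreatest_le _).lt_of_ne fun hkn ↦ hpath ?_
    obtain ⟨p, hp, -⟩ := hends
    rw [← hk] at hkn
    exact ⟨p, by rwa [hkn, Nat.sub_add_cancel hn] at hp⟩
  exact Nat.le_findGreatest hkn (hends.succ hw hvw hblue)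

end TightPath

section Estimate

variable {s n : ℕ}

lemma polynomial_bound_le_pow_four_pow (hs : 1 ≤ s) (hn : 2 ≤ n) :
    (4 ^ s * n ^ (2 ^ s + 1)) ^ (2 ^ (s - 1) - 1) ≤ n ^ 4 ^ s := by
  obtain ⟨t, rfl⟩ := Nat.exists_eq_add_of_le' hs
  have hbase : 4 ^ (t + 1) ≤ n ^ (2 * (t + 1)) := by
    rw [pow_mul]
    exact Nat.pow_le_pow_left (Nat.pow_le_pow_left hn 2) _
  have hexp : (2 * (t + 1) + (2 ^ (t + 1) + 1)) * (2 ^ t - 1) ≤ 4 ^ (t + 1) := by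
    have ht : t + 1 ≤ 2 ^ t := Nat.lt_two_pow_self
    obtain ⟨p, hp⟩ : ∃ p, 2 ^ t = p + 1 := Nat.exists_eq_add_of_le' Nat.one_le_two_pow
    have hfour : 4 ^ (t + 1) = 4 * (p + 1) ^ 2 := by
      rw [pow_succ', ← hp, ← pow_mul, mul_comm t, pow_mul]
      norm_num
    rw [hfour, pow_succ', hp, Nat.add_sub_cancel]
    nlinarith
  calc (4 ^ (t + 1) * n ^ (2 ^ (t + 1) + 1)) ^ (2 ^ (t + 1 - 1) - 1)
      ≤ (n ^ (2 * (t + 1)) * n ^ (2 ^ (t + 1) + 1)) ^ (2 ^ (t + 1 - 1) - 1) := by gcongr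
    _ = n ^ ((2 * (t + 1) + (2 ^ (t + 1) + 1)) * (2 ^ t - 1)) := by
      rw [← pow_add, ← pow_mul, Nat.add_sub_cancel]
    _ ≤ n ^ 4 ^ (t + 1) := Nat.pow_le_pow_right (by lia) hexp

lemma polynomial_bound_le_quasipolynomial_bound (hn : 2 ≤ n) :
    (((4 ^ s * n ^ (2 ^ s + 1)) ^ (2 ^ (s - 1) - 1) : ℕ) : ℝ) ≤
      (2 : ℝ) ^ ((5 : ℝ) ^ s * s.factorial * Real.logb 2 n ^ (s - 1)) := by
  have hn' : (2 : ℝ) ≤ n := by exact_mod_cast hn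
  have hlog : 1 ≤ Real.logb 2 n := by
    rwa [Real.le_logb_iff_rpow_le one_lt_two (by positivity), Real.rpow_one]
  rcases le_or_gt s 1 with hs | hs
  · rw [Nat.sub_eq_zero_of_le hs, pow_zero, Nat.sub_self, pow_zero, Nat.cast_one]
    exact Real.one_le_rpow one_le_two (by positivity)
  have hcoef : (4 : ℝ) ^ s ≤ 5 ^ s * s.factorial := by
    have hfac : (1 : ℝ) ≤ s.factorial := by exact_mod_cast s.factorial_pos
    exact (pow_le_pow_left₀ (by norm_num) (by norm_num) s).trans
      (le_mul_of_one_le_right (by positivity) hfac)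
  calc (((4 ^ s * n ^ (2 ^ s + 1)) ^ (2 ^ (s - 1) - 1) : ℕ) : ℝ)
      ≤ (n : ℝ) ^ 4 ^ s := by exact_mod_cast polynomial_bound_le_pow_four_pow hs.le hn
    _ = ((2 : ℝ) ^ Real.logb 2 n) ^ 4 ^ s := by
      rw [Real.rpow_logb two_pos (by norm_num) (by positivity)]
    _ = (2 : ℝ) ^ ((4 : ℝ) ^ s * Real.logb 2 n) := by
      rw [← Real.rpow_mul_natCast zero_le_two, mul_comm]
      push_cast
      rfl
    _ ≤ (2 : ℝ) ^ ((5 : ℝ) ^ s * s.factorial * Real.logb 2 n ^ (s - 1)) := by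
      refine Real.rpow_le_rpow_of_exponent_le one_le_two ?_
      gcongr
      exact le_self_pow₀ hlog (by lia)

end Estimate

theorem quasipoly_ramsey_general {α : Type*} [LinearOrder α] (blue : α → α → α → Prop)
    {s n : ℕ} (hn : 2 ≤ n) {U : Finset α}
    (hU : (4 ^ s * n ^ (2 ^ s + 1)) ^ (2 ^ (s - 1) - 1) ≤ #U) :
    (∃ S ⊆ U, #S = s ∧ ∀ u ∈ S, ∀ v ∈ S, ∀ w ∈ S, u < v → v < w → ¬blue u v w) ∨
      ∃ v, IsTightPath blue U n v := by
  refine or_iff_not_imp_right.2 fun hpath ↦ ?_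
  obtain ⟨f, hf⟩ := exists_color_lt_of_blue hn hpath
  obtain ⟨_, S, hSU, hcard, hS⟩ := exists_isDescending f (fun _ _ ↦ ()) (U := U)
    (a := fun _ ↦ s) (k := 2 ^ (s - 1) - 1) (by simp) <| by
      rcases s with _ | s
      · simpa using hU
      · have hQ : 1 + (2 ^ s - 1) = 2 ^ s := Nat.add_sub_cancel' Nat.one_le_two_pow
        have hn' : n - 1 + 1 = n := Nat.sub_add_cancel (Nat.one_le_of_lt hn)
        simpa only [Nat.add_sub_cancel, Fintype.card_unit, Fintype.card_fin, hQ, hn',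
          shrinkFactor_two_pow] using hU
  refine ⟨S, hSU, hcard, fun u hu v hv w hw huv hvw hblue ↦ ?_⟩
  exact (hS.color_le u hu v hv w hw huv hvw).not_gt
    (hf u (hSU hu) v (hSU hv) w (hSU hw) huv hvw hblue)

/-- `r_3(K_s, P_n) < 2^{5^s s! (log n)^{s-1}}`: for `n ≥ 2`, every red/blue coloring
(`true` = red, `false` = blue) of the triples of `{1, ..., N}` with
`N ≥ 2^{5^s s! (log₂ n)^{s-1}}` contains a red complete 3-uniform hypergraph on `s`
vertices or a blue tight monotone path on `n` vertices. -/
theorem quasipoly_ramsey (s n N : ℕ) (hn : 2 ≤ n)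
    (hN : (2 : ℝ) ^ ((5 : ℝ) ^ s * (Nat.factorial s) * (Real.logb 2 n) ^ (s - 1)) ≤ N)
    (φ : ℕ → ℕ → ℕ → Bool) :
    (∃ S : Finset ℕ, S ⊆ Finset.Icc 1 N ∧ S.card = s ∧
      ∀ u ∈ S, ∀ v ∈ S, ∀ w ∈ S, u < v → v < w → φ u v w = true) ∨
    (∃ v : ℕ → ℕ, (∀ i < n, v i ∈ Finset.Icc 1 N) ∧
      (∀ i j, i < j → j < n → v i < v j) ∧
      ∀ i, i + 2 < n → φ (v i) (v (i + 1)) (v (i + 2)) = false) := by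
  have hbound := Nat.cast_le.1 ((polynomial_bound_le_quasipolynomial_bound hn).trans hN)
  simpa only [Bool.not_eq_false] using
    (quasipoly_ramsey_general (fun u v w ↦ φ u v w = false) hn
      (U := Finset.Icc 1 N) (by rwa [Nat.card_Icc, Nat.add_sub_cancel])).imp_right
      fun ⟨v, hv⟩ ↦ ⟨v, hv.mem, hv.lt, hv.edge⟩
end

section
/- For positive integers s, t, n, every red/blue coloring of the edges of the complete graph on {1, ..., N} with N ≥ (2s)^{t(t+1) log n} contains either a red clique on s vertices or a blue ordered copy of P_n^t; that is, r_2(K_s, P_n^t) < (2s)^{t(t+1) log n}. -/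
/-!
Call a pair `u < v` an arc if it is blue. If no `s` vertices are pairwise red, fewer than `s * D`
vertices of a set have fewer than `D` forward arcs inside it, since a greedy choice of leftmost
vertices among them yields a red clique. Iterating this from left to right, a set of
`(2s)^(t(t+1)) * M` vertices contains so many blue `(t+1)`-cliques with at least `M` common
neighbours to their right that, by pigeonhole, `M` of them differ in their first vertex only. The
remaining `t` vertices form a blue clique with `M` common neighbours on each side. Finding a blue
power of a path of length `n / 2` in each of the two neighbourhoods and joining them through the
`t`-clique doubles the length: vertices on different sides are more than `t` steps apart.
-/

open Finset

section Antichains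

variable {V : Type*} {r : V → V → Prop} {s : ℕ} {A B : Finset V}

/-- The finite set `A` contains no `r`-antichain of size `s`. When `r` is the relation of being an
increasing blue pair, the `r`-antichains are the red cliques. -/
def AntichainFreeOn (r : V → V → Prop) (s : ℕ) (A : Finset V) : Prop :=
  ∀ S ⊆ A, IsAntichain r (S : Set V) → #S ≠ s

theorem AntichainFreeOn.mono (h : AntichainFreeOn r s A) (hBA : B ⊆ A) : AntichainFreeOn r s B :=
  fun S hS ↦ h S (hS.trans hBA)

theorem AntichainFreeOn.pos (h : AntichainFreeOn r s A) : 0 < s :=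
  Nat.pos_of_ne_zero fun hs ↦ h ∅ (empty_subset A) (by simp) (by simp [hs])

theorem AntichainFreeOn.two_le (h : AntichainFreeOn r s A) (hA : A.Nonempty) : 2 ≤ s := by
  obtain ⟨a, ha⟩ := hA
  have hs : 1 ≠ s := h {a} (by simpa using ha) (by simp)
  have := h.pos
  omega

open scoped Classical in
theorem exists_isAntichain_of_card_rel_lt [Preorder V] (hr : ∀ ⦃u v⦄, r u v → u < v) {d : ℕ}
    (hd : 0 < d) {Z : Finset V} (hdeg : ∀ x ∈ Z, #{y ∈ Z | r x y} < d) (hZ : s * d ≤ #Z) :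
    ∃ S ⊆ Z, #S = s ∧ IsAntichain r (S : Set V) := by
  induction s generalizing Z with
  | zero => exact ⟨∅, empty_subset Z, rfl, by simp⟩
  | succ s ih =>
    rw [add_one_mul] at hZ
    obtain ⟨x, hx⟩ := Z.exists_minimal (card_pos.1 (by omega))
    set Z' := ({y ∈ Z | ¬ r x y} : Finset V).erase x with hZ'
    have hZ'Z : Z' ⊆ Z := (erase_subset _ _).trans (filter_subset _ _)
    have hZ'card : s * d ≤ #Z' := by
      have hsplit : #{y ∈ Z | r x y} + #{y ∈ Z | ¬ r x y} = #Z :=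
        card_filter_add_card_filter_not _
      have hxdeg := hdeg x hx.prop
      have herase : _ ≤ #Z' := pred_card_le_card_erase
      omega
    have hdeg' : ∀ y ∈ Z', #{z ∈ Z' | r y z} < d := fun y hy ↦
      (card_le_card (filter_subset_filter _ hZ'Z)).trans_lt (hdeg y (hZ'Z hy))
    obtain ⟨S, hSZ', hS, hanti⟩ := ih hdeg' hZ'card
    have hxS : x ∉ S := fun hxS ↦ by simpa [hZ'] using hSZ' hxS
    refine ⟨insert x S, insert_subset hx.prop (hSZ'.trans hZ'Z), by simp [hxS, hS], ?_⟩
    rw [coe_insert]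
    exact hanti.insert (fun y hy _ hyx ↦ hx.not_lt (hZ'Z (hSZ' hy)) (hr hyx))
      fun y hy _ ↦ (mem_filter.1 (mem_of_mem_erase (hSZ' hy))).2

open scoped Classical in
theorem AntichainFreeOn.card_le_card_filter_add [Preorder V] (hr : ∀ ⦃u v⦄, r u v → u < v)
    (h : AntichainFreeOn r s A) {d : ℕ} (hd : 0 < d) :
    #A ≤ #{x ∈ A | d ≤ #{y ∈ A | r x y}} + s * d := by
  set Z : Finset V := {x ∈ A | ¬ d ≤ #{y ∈ A | r x y}}
  have hZA : Z ⊆ A := filter_subset _ _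
  have hdeg : ∀ x ∈ Z, #{y ∈ Z | r x y} < d := fun x hx ↦
    (card_le_card (filter_subset_filter _ hZA)).trans_lt (not_le.1 (mem_filter.1 hx).2)
  have hZcard : #Z < s * d := by
    by_contra! hcard
    obtain ⟨S, hSZ, hS, hanti⟩ := exists_isAntichain_of_card_rel_lt hr hd hdeg hcard
    exact h S (hSZ.trans hZA) hanti hS
  have hsplit : #{x ∈ A | d ≤ #{y ∈ A | r x y}} + #Z = #A := card_filter_add_card_filter_not _
  omega

end Antichains

section RichCliques

variable {V : Type*} {r : V → V → Prop} {s d j : ℕ} {A : Finset V}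

open scoped Classical in
/-- The blue `j`-cliques in `A` with at least `d` common blue neighbours to their right in `A`,
where `r` is the relation of being an increasing blue pair. A clique is encoded as the tuple of its
vertices from left to right, so that removing its first vertex is `Fin.tail`. -/
noncomputable def richCliques (r : V → V → Prop) (d j : ℕ) (A : Finset V) :
    Finset (Fin j → V) :=
  {f ∈ Fintype.piFinset fun _ ↦ A |
    (∀ i k, i < k → r (f i) (f k)) ∧ d ≤ #{y ∈ A | ∀ i, r (f i) y}}

open scoped Classical in
theorem mem_richCliques {f : Fin j → V} :
    f ∈ richCliques r d j A ↔
      (∀ i, f i ∈ A) ∧ (∀ i k, i < k → r (f i) (f k)) ∧ d ≤ #{y ∈ A | ∀ i, r (f i) y} := by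
  simp only [richCliques, mem_filter, Fintype.mem_piFinset]

open scoped Classical in
theorem cons_mem_richCliques {x : V} {f : Fin j → V} (hx : x ∈ A)
    (hf : f ∈ richCliques r d j {y ∈ A | r x y}) :
    (Fin.cons x f : Fin (j + 1) → V) ∈ richCliques r d (j + 1) A := by
  simp only [mem_richCliques, mem_filter, filter_filter] at hf
  obtain ⟨hfA, hfr, hfd⟩ := hf
  simpa [mem_richCliques, Fin.forall_fin_succ, hx, fun i ↦ (hfA i).1, fun i ↦ (hfA i).2, hfd]
    using hfr

open scoped Classical in
theorem sum_card_richCliques_le {G : Finset V} (hG : G ⊆ A) :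
    ∑ x ∈ G, #(richCliques r d j {y ∈ A | r x y}) ≤ #(richCliques r d (j + 1) A) := by
  rw [← card_sigma]
  refine card_le_card_of_injOn (fun p ↦ Fin.cons p.1 p.2) (fun p hp ↦ ?_) ?_
  · obtain ⟨hx, hf⟩ := mem_sigma.1 hp
    exact cons_mem_richCliques (hG hx) hf
  · rintro ⟨x, f⟩ - ⟨y, g⟩ - hxy
    obtain ⟨rfl, rfl⟩ := Fin.cons_injective2 hxy
    rfl

theorem le_card_richCliques [Preorder V] (hr : ∀ ⦃u v⦄, r u v → u < v) (hd : 0 < d)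
    (h : AntichainFreeOn r s A) (hA : (2 * s) ^ j * d ≤ #A) :
    (s * d) ^ j * (2 * s) ^ j.choose 2 ≤ #(richCliques r d j A) := by
  classical
  induction j generalizing A with
  | zero =>
    have hempty : (default : Fin 0 → V) ∈ richCliques r d 0 A := by
      simpa [mem_richCliques] using hA
    simpa using ⟨_, hempty⟩
  | succ j ih =>
    set D := (2 * s) ^ j * d with hD
    set N : V → Finset V := fun x ↦ {y ∈ A | r x y}
    set G : Finset V := {x ∈ A | D ≤ #(N x)}
    have hDpos : 0 < D := by have := h.pos; positivity
    have hGcard : s * D ≤ #G := by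
      have hfew : #A ≤ #G + s * D := h.card_le_card_filter_add hr hDpos
      have hAD : 2 * (s * D) ≤ #A := by rw [hD]; convert hA using 1; ring
      omega
    calc (s * d) ^ (j + 1) * (2 * s) ^ (j + 1).choose 2
        = s * D * ((s * d) ^ j * (2 * s) ^ j.choose 2) := by
          rw [hD, Nat.choose_succ_succ' j 1, Nat.choose_one_right]
          ring
      _ ≤ #G * ((s * d) ^ j * (2 * s) ^ j.choose 2) := Nat.mul_le_mul_right _ hGcard
      _ ≤ ∑ x ∈ G, #(richCliques r d j (N x)) := by
          rw [← smul_eq_mul]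
          exact card_nsmul_le_sum _ _ _ fun x hx ↦
            ih (h.mono (filter_subset _ _)) (mem_filter.1 hx).2
      _ ≤ #(richCliques r d (j + 1) A) := sum_card_richCliques_le (filter_subset _ _)

theorem two_pow_succ_le_two_mul_pow_choose_two {s t : ℕ} (hs : 2 ≤ s) (ht : 1 ≤ t) :
    2 ^ (t + 1) ≤ (2 * s) ^ (t + 1).choose 2 := by
  have hchoose : (t + 1) * t = (t + 1).choose 2 * 2 := by
    simpa using Nat.add_one_mul_choose_eq t 1
  calc 2 ^ (t + 1) ≤ 2 ^ (2 * (t + 1).choose 2) :=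
        Nat.pow_le_pow_right two_pos (by nlinarith)
    _ = (2 * 2) ^ (t + 1).choose 2 := by rw [pow_mul]; norm_num
    _ ≤ (2 * s) ^ (t + 1).choose 2 := Nat.pow_le_pow_left (by omega) _

theorem pow_mul_le_mul_pow_choose_two {s t d M : ℕ} (hs : 2 ≤ s) (ht : 1 ≤ t)
    (hd : (2 * s) ^ (t * (t + 1)) * M = (2 * s) ^ (t + 1) * d) :
    ((2 * s) ^ (t + 1) * d) ^ t * M ≤ (s * d) ^ (t + 1) * (2 * s) ^ (t + 1).choose 2 := by
  refine le_of_mul_le_mul_left (a := 2 ^ (t + 1)) ?_ (by positivity)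
  calc 2 ^ (t + 1) * (((2 * s) ^ (t + 1) * d) ^ t * M)
      ≤ (2 * s) ^ (t + 1).choose 2 * (((2 * s) ^ (t + 1) * d) ^ t * M) :=
        Nat.mul_le_mul_right _ (two_pow_succ_le_two_mul_pow_choose_two hs ht)
    _ = (2 * s) ^ (t + 1).choose 2 * d ^ t * ((2 * s) ^ (t * (t + 1)) * M) := by ring
    _ = 2 ^ (t + 1) * ((s * d) ^ (t + 1) * (2 * s) ^ (t + 1).choose 2) := by rw [hd]; ring

open scoped Classical in
theorem exists_tuple_of_pow_mul_le_card_richCliques {t M : ℕ} (hM : 0 < M)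
    (hcard : #A ^ t * M ≤ #(richCliques r d (t + 1) A)) (hA : A.Nonempty) :
    ∃ c : Fin t → V, (∀ i, c i ∈ A) ∧ (∀ i k, i < k → r (c i) (c k)) ∧
      M ≤ #{x ∈ A | ∀ i, r x (c i)} ∧ d ≤ #{y ∈ A | ∀ i, r (c i) y} := by
  have htail : ∀ f ∈ richCliques r d (t + 1) A,
      Fin.tail f ∈ Fintype.piFinset fun _ : Fin t ↦ A := fun f hf ↦
    Fintype.mem_piFinset.2 fun i ↦ (mem_richCliques.1 hf).1 i.succ
  obtain ⟨c, hcA, hc⟩ := exists_le_card_fiber_of_mul_le_card_of_maps_to htail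
    (Fintype.piFinset_nonempty.2 fun _ ↦ hA) (by simpa using hcard)
  set F : Finset (Fin (t + 1) → V) := {f ∈ richCliques r d (t + 1) A | Fin.tail f = c}
  have hFcons : ∀ f ∈ F, f = Fin.cons (f 0) c := fun f hf ↦ by
    rw [← (mem_filter.1 hf).2, Fin.cons_self_tail]
  obtain ⟨f, hf⟩ : F.Nonempty := card_pos.1 (hM.trans_le hc)
  obtain ⟨hfF, rfl⟩ := mem_filter.1 hf
  obtain ⟨-, hfr, hfd⟩ := mem_richCliques.1 hfF
  refine ⟨Fin.tail f, Fintype.mem_piFinset.1 hcA,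
    fun i k hik ↦ hfr _ _ (Fin.succ_lt_succ_iff.2 hik), hc.trans ?_,
    hfd.trans (card_le_card fun y hy ↦ ?_)⟩
  · refine card_le_card_of_injOn (· 0) (fun g hg ↦ ?_) fun g hg g' hg' h0 ↦ ?_
    · obtain ⟨hgF, hgf⟩ := mem_filter.1 hg
      obtain ⟨hgA, hgr, -⟩ := mem_richCliques.1 hgF
      exact mem_filter.2 ⟨hgA 0, fun i ↦ hgf ▸ hgr _ _ i.succ_pos⟩
    · rw [hFcons g hg, hFcons g' hg']
      exact congrArg (Fin.cons · _) h0
  · simp only [mem_filter] at hy ⊢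
    exact ⟨hy.1, fun i ↦ hy.2 i.succ⟩

open scoped Classical in
theorem AntichainFreeOn.exists_tuple_le_card_left_right [Preorder V]
    (hr : ∀ ⦃u v⦄, r u v → u < v) {t M : ℕ} (ht : 1 ≤ t) (hM : 0 < M)
    (h : AntichainFreeOn r s A) (hA : (2 * s) ^ (t * (t + 1)) * M ≤ #A) :
    ∃ c : Fin t → V, (∀ i, c i ∈ A) ∧ (∀ i k, i < k → r (c i) (c k)) ∧
      M ≤ #{x ∈ A | ∀ i, r x (c i)} ∧ M ≤ #{y ∈ A | ∀ i, r (c i) y} := by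
  have hs := h.pos
  obtain ⟨B, hBA, hB⟩ := exists_subset_card_eq hA
  have hBne : B.Nonempty := card_pos.1 (hB ▸ by positivity)
  obtain ⟨k, hk⟩ : ∃ k, t * (t + 1) = t + 1 + k :=
    Nat.exists_eq_add_of_le (Nat.le_mul_of_pos_left _ ht)
  set d := (2 * s) ^ k * M with hd
  have hMd : M ≤ d := Nat.le_mul_of_pos_left M (by positivity)
  have hdM : (2 * s) ^ (t * (t + 1)) * M = (2 * s) ^ (t + 1) * d := by
    rw [hd, hk, pow_add, mul_assoc]
  have hmany := le_card_richCliques hr (hM.trans_le hMd) (h.mono hBA) (hdM.symm.trans hB.symm).le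
  have hpigeon := pow_mul_le_mul_pow_choose_two (h.two_le (hBne.mono hBA)) ht hdM
  rw [← hdM, ← hB] at hpigeon
  obtain ⟨c, hcB, hcr, hleft, hright⟩ :=
    exists_tuple_of_pow_mul_le_card_richCliques hM (hpigeon.trans hmany) hBne
  exact ⟨c, fun i ↦ hBA (hcB i), hcr,
    hleft.trans (card_le_card (filter_subset_filter _ hBA)),
    hMd.trans (hright.trans (card_le_card (filter_subset_filter _ hBA)))⟩

end RichCliques

section PowerPaths

variable {V : Type*} {r : V → V → Prop} {s t m n : ℕ} {A : Finset V}

/-- The first `n` terms of `v` span a copy of `P_n^t` in `r`. The later terms of `v` are junk.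
Increasingness is not part of the definition: it follows when `t ≥ 1` and `r` is contained in
`<`. -/
def IsPowerPath (r : V → V → Prop) (t n : ℕ) (v : ℕ → V) : Prop :=
  ∀ ⦃i j⦄, i < j → j < n → j ≤ i + t → r (v i) (v j)

theorem IsPowerPath.mono {v : ℕ → V} (hv : IsPowerPath r t n v) (hmn : m ≤ n) :
    IsPowerPath r t m v :=
  fun _ _ hij hj ↦ hv hij (hj.trans_le hmn)

theorem IsPowerPath.strictMonoOn [Preorder V] (hr : ∀ ⦃u v⦄, r u v → u < v) (ht : 1 ≤ t)
    {v : ℕ → V} (hv : IsPowerPath r t n v) : StrictMonoOn v (Set.Iio n) := by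
  refine strictMonoOn_of_lt_add_one Set.ordConnected_Iio fun i _ _ hi ↦ ?_
  exact hr (hv i.lt_succ_self hi (by omega))

/-- The concatenation of the first `m` terms of `p`, the tuple `c`, and `q`. -/
def joinThrough (m : ℕ) (p : ℕ → V) (c : Fin t → V) (q : ℕ → V) (i : ℕ) : V :=
  if i < m then p i else if h : i - m < t then c ⟨i - m, h⟩ else q (i - m - t)

theorem joinThrough_mem {p q : ℕ → V} {c : Fin t → V} (hp : ∀ i, p i ∈ A) (hc : ∀ i, c i ∈ A)
    (hq : ∀ i, q i ∈ A) (i : ℕ) : joinThrough m p c q i ∈ A := by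
  unfold joinThrough
  split_ifs <;> simp only [hp, hc, hq]

theorem isPowerPath_joinThrough {p q : ℕ → V} {c : Fin t → V} (hp : IsPowerPath r t m p)
    (hq : IsPowerPath r t n q) (hc : ∀ i k, i < k → r (c i) (c k))
    (hpc : ∀ i k, r (p i) (c k)) (hcq : ∀ k i, r (c k) (q i)) :
    IsPowerPath r t (m + t + n) (joinThrough m p c q) := by
  intro i j hij hj hjt
  unfold joinThrough
  -- A term of `p` and a term of `q` are more than `t` apart, so `omega` excludes such a pair.
  split_ifs <;> first
    | omega
    | exact hpc _ _
    | exact hcq _ _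
    | exact hp hij ‹_› hjt
    | exact hc _ _ (Fin.mk_lt_mk.2 (by omega))
    | exact hq (by omega) (by omega) (by omega)

theorem AntichainFreeOn.exists_isPowerPath [Preorder V] (hr : ∀ ⦃u v⦄, r u v → u < v)
    (ht : 1 ≤ t) (h : AntichainFreeOn r s A)
    (hA : (2 * s) ^ (t * (t + 1) * Nat.log 2 n) ≤ #A) :
    ∃ v : ℕ → V, (∀ i, v i ∈ A) ∧ IsPowerPath r t n v := by
  classical
  have hs := h.pos
  induction n using Nat.strong_induction_on generalizing A with
  | _ n ih =>
    obtain hn | hn := lt_or_ge n 2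
    · obtain ⟨a, ha⟩ : A.Nonempty := card_pos.1 (hA.trans_lt' (by positivity))
      exact ⟨fun _ ↦ a, fun _ ↦ ha, fun i j hij hj ↦ by omega⟩
    set M := (2 * s) ^ (t * (t + 1) * Nat.log 2 (n / 2)) with hM
    have hAM : (2 * s) ^ (t * (t + 1)) * M ≤ #A := by
      rwa [hM, ← pow_add, add_comm, ← mul_add_one, ← Nat.log_of_one_lt_of_le one_lt_two hn]
    obtain ⟨c, hcA, hcr, hleft, hright⟩ :=
      h.exists_tuple_le_card_left_right hr ht (by positivity) hAM
    have hhalf : n / 2 < n := by omega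
    obtain ⟨p, hpL, hp⟩ := ih _ hhalf (h.mono (filter_subset _ _)) hleft
    obtain ⟨q, hqR, hq⟩ := ih _ hhalf (h.mono (filter_subset _ _)) hright
    simp only [mem_filter] at hpL hqR
    have hjoin := isPowerPath_joinThrough hp hq hcr (fun i ↦ (hpL i).2) fun k i ↦ (hqR i).2 k
    exact ⟨_, joinThrough_mem (fun i ↦ (hpL i).1) hcA fun i ↦ (hqR i).1, hjoin.mono (by omega)⟩

end PowerPaths

theorem pow_mul_natLog_le_of_rpow_mul_logb_le {a b k n N : ℕ} (ha : 1 ≤ a)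
    (h : (a : ℝ) ^ (k * Real.logb b n) ≤ N) : a ^ (k * Nat.log b n) ≤ N := by
  have hexp : (k * Nat.log b n : ℕ) ≤ k * Real.logb b n := by
    push_cast
    gcongr
    exact Real.natLog_le_logb n b
  have hpow := (Real.rpow_le_rpow_of_exponent_le (by exact_mod_cast ha) hexp).trans h
  rw [Real.rpow_natCast] at hpow
  exact_mod_cast hpow

theorem clique_vs_power_path_large_s_general {V : Type*} [Preorder V] {r : V → V → Prop}
    (hr : ∀ ⦃u v⦄, r u v → u < v) {s t n : ℕ} (ht : 1 ≤ t) {A : Finset V}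
    (hA : (2 * s) ^ (t * (t + 1) * Nat.log 2 n) ≤ #A) :
    (∃ S ⊆ A, #S = s ∧ IsAntichain r (S : Set V)) ∨
      ∃ v : ℕ → V, (∀ i, v i ∈ A) ∧ StrictMonoOn v (Set.Iio n) ∧ IsPowerPath r t n v := by
  refine or_iff_not_imp_left.2 fun hS ↦ ?_
  have hfree : AntichainFreeOn r s A := fun S hSA hanti hcard ↦ hS ⟨S, hSA, hcard, hanti⟩
  obtain ⟨v, hvA, hv⟩ := hfree.exists_isPowerPath hr ht hA
  exact ⟨v, hvA, hv.strictMonoOn hr ht, hv⟩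

/-- `r_2(K_s, P_n^t) < (2s)^{t(t+1) log n}`: every red/blue coloring (`true` = red)
of the pairs of `{1, ..., N}` with `N ≥ (2s)^{t(t+1) log₂ n}` contains a red clique
on `s` vertices or a blue ordered copy of `P_n^t`. -/
theorem clique_vs_power_path_large_s (s t n N : ℕ) (hs : 1 ≤ s) (ht : 1 ≤ t)
    (hn : 1 ≤ n)
    (hN : (2 * s : ℝ) ^ ((t * (t + 1) : ℝ) * Real.logb 2 n) ≤ N)
    (χ : ℕ → ℕ → Bool) :
    (∃ S : Finset ℕ, S ⊆ Finset.Icc 1 N ∧ S.card = s ∧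
      ∀ u ∈ S, ∀ v ∈ S, u < v → χ u v = true) ∨
    (∃ v : ℕ → ℕ, (∀ i < n, v i ∈ Finset.Icc 1 N) ∧
      (∀ i j, i < j → j < n → v i < v j) ∧
      ∀ i j, i < j → j < n → j - i ≤ t → χ (v i) (v j) = false) := by
  have hcard : (2 * s) ^ (t * (t + 1) * Nat.log 2 n) ≤ #(Icc 1 N) := by
    rw [Nat.card_Icc, Nat.add_sub_cancel]
    exact pow_mul_natLog_le_of_rpow_mul_logb_le (by omega) (by exact_mod_cast hN)
  obtain ⟨S, hSN, hS, hanti⟩ | ⟨v, hvN, hmono, hv⟩ := clique_vs_power_path_large_s_general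
    (r := fun u v ↦ u < v ∧ χ u v = false) (fun _ _ h ↦ h.1) ht hcard
  · exact .inl ⟨S, hSN, hS, fun u hu v hv huv ↦ by simpa [huv] using hanti hu hv huv.ne⟩
  · exact .inr ⟨v, fun i _ ↦ hvN i, fun i j hij hj ↦ hmono (hij.trans hj) hj hij,
      fun i j hij hj hd ↦ (hv hij hj (by omega)).2⟩
end
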